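/- arXiv:1306.1386 — 2 statements merged into one kernel-verified Lean document; each statement's English description precedes it below -/
import Mathlib

section
/- Let G be a connected non-bipartite finite simple graph on n ≥ 3 vertices and let α < 0 be a real number. Then S_α(G) ≥ (2n−2)^α + (n−1)·(n−2)^α, with equality if and only if G is the complete graph K_n. (Non-bipartiteness of a connected graph guarantees that all n signless Laplacian eigenvalues of G are strictly positive.) -/
/-!
The map `x ↦ x ^ α` is convex and decreasing on the positive reals, and the bound is an instance
of Klein's trace inequality `tr f(A) ≥ tr f(B) + tr (f'(B) (A - B))` with `A = Q G` and
`B = Q K_n = (n - 2) I + J`.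

Concretely, let `v_i` be an orthonormal eigenbasis of `Q G` with eigenvalues `q_i`, and let
`p_i = ⟨v_i, 𝟙⟩² / n`, so that `0 ≤ p_i ≤ 1` and `∑ p_i = 1`. Taking the tangent-line bound
of `x ^ α` at `2n - 2` with weight `p_i` and at `n - 2` with weight `1 - p_i`, and summing over `i`
(`sum_rpow_ge`), leaves only the linear quantities `∑ p_i q_i = ⟨𝟙, Q 𝟙⟩ / n = 2 d / n` and
`∑ q_i = tr Q = d`, where `d` is the degree sum. Since `d ≤ n (n - 1)`, with equality only for the
complete graph, and the slopes are negative, the correction terms are nonnegative, and positive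
unless `G = ⊤`.

Positivity of the eigenvalues (`eigs_pos`) is where connectedness and non-bipartiteness enter: a
null vector of `Q G` changes sign along every edge, so by connectedness it vanishes nowhere and its
signs give a proper 2-colouring. For `K_n` every eigenvalue is `n - 2` or `2n - 2`
(`eigs_top`), and the trace fixes the multiplicities.
-/

open Matrix Finset

noncomputable section

namespace SLP

variable {V : Type*} [Fintype V] [DecidableEq V]

/-- The signless Laplacian matrix `Q(G) = D(G) + A(G)` of a finite simple graph. -/
def Q (G : SimpleGraph V) : Matrix V V ℝ :=
  letI : DecidableRel G.Adj := Classical.decRel _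
  G.degMatrix ℝ + G.adjMatrix ℝ

lemma Q_isHermitian (G : SimpleGraph V) : (Q G).IsHermitian := by
  letI : DecidableRel G.Adj := Classical.decRel _
  have h : Q G = G.degMatrix ℝ + G.adjMatrix ℝ := rfl
  rw [h, Matrix.IsHermitian]
  ext i j
  simp [Matrix.conjTranspose_apply, SimpleGraph.degMatrix, Matrix.diagonal,
    SimpleGraph.adjMatrix_apply, SimpleGraph.adj_comm]
  rcases eq_or_ne i j with rfl | hij
  · simp
  · simp [hij, Ne.symm hij]

/-- The (unordered) signless Laplacian eigenvalues of `G`, listed with multiplicity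
(indexed by the vertices). -/
def eigs (G : SimpleGraph V) : V → ℝ := (Q_isHermitian G).eigenvalues

/-- `S α G`: the sum of the α-th (real) powers of the nonzero signless Laplacian
eigenvalues of `G`. -/
def S (α : ℝ) (G : SimpleGraph V) : ℝ :=
  ∑ v ∈ Finset.univ.filter (fun v => eigs G v ≠ 0), eigs G v ^ α

/-! ### The signless Laplacian as a quadratic form -/

/-- The degree of a vertex as a real number, for the classical decidability instance used by `Q`. -/
def rdeg (G : SimpleGraph V) (i : V) : ℝ :=
  letI : DecidableRel G.Adj := Classical.decRel _
  (G.degree i : ℝ)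

open Classical in
lemma Q_mulVec (G : SimpleGraph V) (x : V → ℝ) (i : V) :
    (Q G *ᵥ x) i = rdeg G i * x i + ∑ j, if G.Adj i j then x j else 0 := by
  have h : Q G = G.degMatrix ℝ + G.adjMatrix ℝ := by
    unfold Q; congr!
  have hd : rdeg G i = (G.degree i : ℝ) := by
    unfold rdeg; congr!
  rw [h, hd, Matrix.add_mulVec, Pi.add_apply, SimpleGraph.degMatrix, Matrix.mulVec_diagonal]
  congr 1
  simp [Matrix.mulVec, dotProduct, SimpleGraph.adjMatrix_apply]

open Classical in
lemma rdeg_eq (G : SimpleGraph V) (i : V) :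
    rdeg G i = ∑ j, if G.Adj i j then (1 : ℝ) else 0 := by
  have hd : rdeg G i = (G.degree i : ℝ) := by
    unfold rdeg; congr!
  rw [hd, ← SimpleGraph.card_neighborFinset_eq_degree, SimpleGraph.neighborFinset_eq_filter]
  simp

lemma Q_mulVec_one (G : SimpleGraph V) (i : V) : (Q G *ᵥ (fun _ => 1)) i = 2 * rdeg G i := by
  classical
  rw [Q_mulVec]
  simp only [← rdeg_eq]
  ring

lemma Q_trace (G : SimpleGraph V) : (Q G).trace = ∑ i, rdeg G i := by
  simp [Q, Matrix.trace, SimpleGraph.degMatrix, rdeg]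

open Classical in
lemma Q_quadratic (G : SimpleGraph V) (x : V → ℝ) :
    2 * (x ⬝ᵥ (Q G *ᵥ x)) = ∑ i, ∑ j, if G.Adj i j then (x i + x j) ^ 2 else 0 := by
  have e1 : x ⬝ᵥ (Q G *ᵥ x) = ∑ i, ∑ j, if G.Adj i j then x i ^ 2 + x i * x j else 0 := by
    simp only [dotProduct, Q_mulVec, rdeg_eq]
    refine Finset.sum_congr rfl fun i _ => ?_
    rw [Finset.sum_mul, ← Finset.sum_add_distrib, Finset.mul_sum]
    refine Finset.sum_congr rfl fun j _ => ?_
    split_ifs <;> ring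
  have e2 : x ⬝ᵥ (Q G *ᵥ x) = ∑ i, ∑ j, if G.Adj i j then x j ^ 2 + x i * x j else 0 := by
    rw [e1, Finset.sum_comm]
    refine Finset.sum_congr rfl fun i _ => Finset.sum_congr rfl fun j _ => ?_
    rw [G.adj_comm, mul_comm (x i)]
  rw [two_mul]
  nth_rw 1 [e1]
  rw [e2, ← Finset.sum_add_distrib]
  refine Finset.sum_congr rfl fun i _ => ?_
  rw [← Finset.sum_add_distrib]
  refine Finset.sum_congr rfl fun j _ => ?_
  split_ifs <;> ring

/-! ### Eigenvectors and positivity of the spectrum -/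

/-- The `v`-th member of the eigenbasis of `Q G`, as a plain function on the vertices. -/
def evec (G : SimpleGraph V) (v : V) : V → ℝ := ((Q_isHermitian G).eigenvectorBasis v).ofLp

lemma Q_mulVec_evec (G : SimpleGraph V) (v : V) :
    Q G *ᵥ evec G v = eigs G v • evec G v :=
  (Q_isHermitian G).mulVec_eigenvectorBasis v

lemma evec_dotProduct_self (G : SimpleGraph V) (v : V) : evec G v ⬝ᵥ evec G v = 1 := by
  have h := (Q_isHermitian G).eigenvectorBasis.orthonormal.1 v
  have h2 := EuclideanSpace.real_norm_sq_eq ((Q_isHermitian G).eigenvectorBasis v)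
  rw [h] at h2
  simp only [dotProduct, evec, ← pow_two]
  linarith

lemma eigs_eq_quadratic (G : SimpleGraph V) (v : V) :
    evec G v ⬝ᵥ (Q G *ᵥ evec G v) = eigs G v := by
  rw [Q_mulVec_evec, dotProduct_smul, evec_dotProduct_self, smul_eq_mul, mul_one]

lemma eigs_pos (G : SimpleGraph V) (hconn : G.Connected) (hnonbip : ¬ G.Colorable 2) (v : V) :
    0 < eigs G v := by
  classical
  have hq := Q_quadratic G (evec G v)
  rw [eigs_eq_quadratic] at hq
  have hterm : ∀ i j, 0 ≤ if G.Adj i j then (evec G v i + evec G v j) ^ 2 else 0 := by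
    intro i j
    split_ifs <;> positivity
  have hrow : ∀ i, 0 ≤ ∑ j, if G.Adj i j then (evec G v i + evec G v j) ^ 2 else 0 :=
    fun i => Finset.sum_nonneg fun j _ => hterm i j
  have hnn := Finset.sum_nonneg fun i (_ : i ∈ Finset.univ) => hrow i
  rcases (show 0 ≤ eigs G v by linarith).lt_or_eq with h | h
  · exact h
  exfalso
  rw [← h, mul_zero, eq_comm, Finset.sum_eq_zero_iff_of_nonneg fun i _ => hrow i] at hq
  have hadj : ∀ i j, G.Adj i j → evec G v j = - evec G v i := by
    intro i j hij
    have h1 := (Finset.sum_eq_zero_iff_of_nonneg fun j _ => hterm i j).1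
      (hq i (Finset.mem_univ _)) j (Finset.mem_univ _)
    rw [if_pos hij] at h1
    have := pow_eq_zero_iff (two_ne_zero) |>.1 h1
    linarith
  have hwalk : ∀ i j, G.Walk i j → evec G v i = 0 → evec G v j = 0 := by
    intro i j w
    induction w with
    | nil => exact id
    | cons hij _ ih => exact fun h0 => ih (by rw [hadj _ _ hij, h0, neg_zero])
  have hne : ∀ i, evec G v i ≠ 0 := by
    intro i h0
    have hz : evec G v = 0 := by
      funext j
      obtain ⟨w⟩ := hconn.preconnected i j
      exact hwalk i j w h0
    have := evec_dotProduct_self G v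
    rw [hz] at this
    simp at this
  apply hnonbip
  let c : G.Coloring Bool := SimpleGraph.Coloring.mk (fun i => decide (0 < evec G v i)) (by
    intro i j hij
    have h1 := hadj i j hij
    rcases (hne i).lt_or_gt with h2 | h2
    · have : 0 < evec G v j := by linarith
      simp [this, h2.not_gt]
    · have : ¬ 0 < evec G v j := by linarith
      simp [this, h2])
  simpa using c.colorable

/-! ### Weights of the eigenvectors along the all-ones vector -/

/-- The weight `⟨v, 𝟙⟩² / n` of an eigenvector along the all-ones direction, which is the Perron
direction of `Q K_n`. -/
def wt (G : SimpleGraph V) (v : V) : ℝ := (∑ i, evec G v i) ^ 2 / Fintype.card V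

/-- Parseval's identity in the eigenbasis of `Q G`. -/
lemma sum_dot_mul_dot (G : SimpleGraph V) (x y : V → ℝ) :
    ∑ v, (evec G v ⬝ᵥ x) * (evec G v ⬝ᵥ y) = x ⬝ᵥ y := by
  have h := (Q_isHermitian G).eigenvectorBasis.sum_inner_mul_inner
    (WithLp.toLp 2 x) (WithLp.toLp 2 y)
  simp only [EuclideanSpace.inner_eq_star_dotProduct, star_trivial] at h
  rw [dotProduct_comm x y, ← h]
  refine Finset.sum_congr rfl fun v _ => ?_
  rw [dotProduct_comm _ y]
  rfl

lemma wt_nonneg (G : SimpleGraph V) (v : V) : 0 ≤ wt G v := by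
  unfold wt; positivity

lemma sum_wt (G : SimpleGraph V) (h : 0 < Fintype.card V) : ∑ v, wt G v = 1 := by
  have h1 := sum_dot_mul_dot G (fun _ => 1) (fun _ => 1)
  have h' : (Fintype.card V : ℝ) ≠ 0 := by positivity
  simp only [dotProduct, mul_one, Finset.sum_const, Finset.card_univ, nsmul_eq_mul] at h1
  simp only [wt, ← Finset.sum_div, pow_two]
  rw [h1, div_self h']

lemma sum_wt_mul_eigs (G : SimpleGraph V) :
    ∑ v, wt G v * eigs G v = 2 * (∑ i, rdeg G i) / Fintype.card V := by
  have h1 := sum_dot_mul_dot G (fun _ => 1) (Q G *ᵥ fun _ => 1)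
  have h2 : ∀ v, evec G v ⬝ᵥ (Q G *ᵥ fun _ => 1) = eigs G v * (evec G v ⬝ᵥ fun _ => 1) := by
    intro v
    have hT : (Q G)ᵀ = Q G := by
      have := Q_isHermitian G
      rwa [Matrix.IsHermitian, Matrix.conjTranspose_eq_transpose_of_trivial] at this
    rw [Matrix.dotProduct_mulVec, ← Matrix.mulVec_transpose, hT, Q_mulVec_evec, smul_dotProduct,
      smul_eq_mul]
  simp only [h2] at h1
  simp only [dotProduct, mul_one, one_mul, Q_mulVec_one, ← Finset.mul_sum] at h1
  rw [← h1, Finset.sum_div]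
  refine Finset.sum_congr rfl fun v _ => ?_
  unfold wt
  ring

lemma sum_eigs (G : SimpleGraph V) : ∑ v, eigs G v = ∑ i, rdeg G i := by
  rw [← Q_trace, (Q_isHermitian G).trace_eq_sum_eigenvalues]
  rfl

/-! ### Klein's inequality for a negative power -/

/-- The graph of `x ^ α` lies above its tangent at `c`, by `exp t ≥ 1 + t` and `log t ≤ t - 1`. -/
lemma rpow_tangent {α x c : ℝ} (hα : α < 0) (hx : 0 < x) (hc : 0 < c) :
    c ^ α + α * c ^ (α - 1) * (x - c) ≤ x ^ α := by
  have h1 : 1 + α * (x / c - 1) ≤ (x / c) ^ α := by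
    have ht : 0 < x / c := by positivity
    rw [Real.rpow_def_of_pos ht]
    have := Real.add_one_le_exp (Real.log (x / c) * α)
    have := Real.log_le_sub_one_of_pos ht
    nlinarith
  have hcα : 0 < c ^ α := Real.rpow_pos_of_pos hc α
  rw [Real.div_rpow hx.le hc.le, le_div_iff₀ hcα] at h1
  rw [Real.rpow_sub_one hc.ne']
  calc _ = (1 + α * (x / c - 1)) * c ^ α := by field_simp
    _ ≤ _ := h1

/-- Klein's inequality for `x ^ α` against an operator with eigenvalues `a` (once) and `b`
(`card V - 1` times); `p` holds the weights of the eigenvectors along the `a`-eigenline. -/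
lemma sum_rpow_ge {α a b : ℝ} (hα : α < 0) (ha : 0 < a) (hb : 0 < b) (q p : V → ℝ)
    (hq : ∀ v, 0 < q v) (hp : ∀ v, 0 ≤ p v) (hsum : ∑ v, p v = 1) :
    a ^ α + ((Fintype.card V : ℝ) - 1) * b ^ α + α * a ^ (α - 1) * (∑ v, p v * q v - a)
      + α * b ^ (α - 1) * (∑ v, q v - ∑ v, p v * q v - ((Fintype.card V : ℝ) - 1) * b)
      ≤ ∑ v, q v ^ α := by
  have hp1 : ∀ v, p v ≤ 1 := fun v =>
    hsum ▸ Finset.single_le_sum (fun i _ => hp i) (Finset.mem_univ v)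
  have key : ∑ v, (p v * (a ^ α + α * a ^ (α - 1) * (q v - a))
      + (1 - p v) * (b ^ α + α * b ^ (α - 1) * (q v - b))) ≤ ∑ v, q v ^ α := by
    refine Finset.sum_le_sum fun v _ => ?_
    have h1 := mul_le_mul_of_nonneg_left (rpow_tangent hα (hq v) ha) (hp v)
    have h2 := mul_le_mul_of_nonneg_left (rpow_tangent hα (hq v) hb) (sub_nonneg.2 (hp1 v))
    linarith
  refine le_trans (le_of_eq ?_) key
  have : ∀ v, p v * (a ^ α + α * a ^ (α - 1) * (q v - a))
      + (1 - p v) * (b ^ α + α * b ^ (α - 1) * (q v - b))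
      = (b ^ α - α * b ^ (α - 1) * b)
        + (a ^ α - b ^ α - α * a ^ (α - 1) * a + α * b ^ (α - 1) * b) * p v
        + (α * a ^ (α - 1) - α * b ^ (α - 1)) * (p v * q v) + α * b ^ (α - 1) * q v := by
    intro v; ring
  simp only [this, Finset.sum_add_distrib, ← Finset.mul_sum, hsum, Finset.sum_const,
    Finset.card_univ, nsmul_eq_mul]
  ring

/-! ### Degree sums and the complete graph -/

lemma rdeg_le (G : SimpleGraph V) (i : V) : rdeg G i ≤ (Fintype.card V : ℝ) - 1 := by
  classical
  have h : (G.degree i : ℝ) + 1 ≤ Fintype.card V := by exact_mod_cast G.degree_lt_card_verts i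
  have hd : rdeg G i = (G.degree i : ℝ) := by
    unfold rdeg; congr!
  linarith

lemma sum_rdeg_lt (G : SimpleGraph V) (hG : G ≠ ⊤) :
    ∑ i, rdeg G i < (Fintype.card V : ℝ) * ((Fintype.card V : ℝ) - 1) := by
  classical
  obtain ⟨i, j, hij, hadj⟩ : ∃ i j, i ≠ j ∧ ¬ G.Adj i j := by
    by_contra! h
    exact hG (by ext i j; exact ⟨fun h => h.ne, fun h' => h i j h'⟩)
  have hlt : rdeg G i < (Fintype.card V : ℝ) - 1 := by
    have hd : rdeg G i = (G.degree i : ℝ) := by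
      unfold rdeg; congr!
    have h1 : G.degree i + 2 ≤ Fintype.card V := by
      have hsub : G.neighborFinset i ⊆ ({i, j} : Finset V)ᶜ := by
        intro k hk
        rw [SimpleGraph.mem_neighborFinset] at hk
        simp only [Finset.mem_compl, Finset.mem_insert, Finset.mem_singleton, not_or]
        exact ⟨hk.ne', fun h => hadj (h ▸ hk)⟩
      have h2 := Finset.card_le_card hsub
      rw [Finset.card_compl, Finset.card_pair hij, SimpleGraph.card_neighborFinset_eq_degree] at h2
      have h3 := Finset.card_le_univ ({i, j} : Finset V)
      rw [Finset.card_pair hij] at h3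
      omega
    have h2 : (G.degree i : ℝ) + 2 ≤ Fintype.card V := by exact_mod_cast h1
    linarith
  calc ∑ i, rdeg G i < ∑ _i : V, ((Fintype.card V : ℝ) - 1) :=
        Finset.sum_lt_sum (fun i _ => rdeg_le G i) ⟨i, Finset.mem_univ i, hlt⟩
    _ = _ := by rw [Finset.sum_const, Finset.card_univ, nsmul_eq_mul]

lemma rdeg_top (i : V) : rdeg (⊤ : SimpleGraph V) i = (Fintype.card V : ℝ) - 1 := by
  classical
  have h := SimpleGraph.complete_graph_degree i
  have : 1 ≤ Fintype.card V := Fintype.card_pos_iff.2 ⟨i⟩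
  unfold rdeg
  rw [← Nat.cast_one, ← Nat.cast_sub this, ← h]
  congr!

/-- Each eigenvalue `q` of `Q K_n` satisfies `q = n - 2` or `q = 2n - 2`: either the eigenvector is
orthogonal to `𝟙`, on whose complement `Q K_n` is the scalar `n - 2`, or pairing the eigenvalue
equation with `𝟙` gives `q = 2n - 2`. -/
lemma eigs_top (v : V) : eigs (⊤ : SimpleGraph V) v = (Fintype.card V : ℝ) - 2 ∨
    eigs (⊤ : SimpleGraph V) v = 2 * (Fintype.card V : ℝ) - 2 := by
  classical
  set x := evec (⊤ : SimpleGraph V) v with hx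
  have h : ∀ i, eigs (⊤ : SimpleGraph V) v * x i = ((Fintype.card V : ℝ) - 2) * x i + ∑ j, x j := by
    intro i
    have h1 := congrFun (Q_mulVec_evec (⊤ : SimpleGraph V) v) i
    rw [Q_mulVec, rdeg_top, Pi.smul_apply, smul_eq_mul, ← hx] at h1
    have h2 : ∀ _ : DecidableRel (⊤ : SimpleGraph V).Adj,
        ∑ j, (if (⊤ : SimpleGraph V).Adj i j then x j else 0) = ∑ j, x j - x i := by
      intro _
      rw [eq_sub_iff_add_eq, ← Finset.sum_erase_add _ x (Finset.mem_univ i)]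
      congr 1
      rw [← Finset.sum_filter]
      refine Finset.sum_congr ?_ fun _ _ => rfl
      ext j
      simp [eq_comm]
    rw [h2 fun _ _ => Classical.propDecidable _] at h1
    linarith
  by_cases hs : ∑ j, x j = 0
  · left
    obtain ⟨i, hi⟩ : ∃ i, x i ≠ 0 := by
      by_contra! h0
      have h1 := evec_dotProduct_self (⊤ : SimpleGraph V) v
      rw [← hx, show x = 0 from funext h0] at h1
      simp at h1
    have h1 := h i
    rw [hs, add_zero] at h1
    exact mul_right_cancel₀ hi h1
  · right
    have h1 := Finset.sum_congr (rfl : (Finset.univ : Finset V) = _) fun i _ => h i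
    rw [← Finset.mul_sum, Finset.sum_add_distrib, ← Finset.mul_sum, Finset.sum_const,
      Finset.card_univ, nsmul_eq_mul, ← add_mul] at h1
    rw [mul_right_cancel₀ hs h1]
    ring

/-! ### The bound and its equality case -/

theorem S_alpha_ge_complete_neg {n : ℕ} (hn : 3 ≤ n) (hcard : Fintype.card V = n)
    (G : SimpleGraph V) (hconn : G.Connected) (hnonbip : ¬ G.Colorable 2)
    (α : ℝ) (hα : α < 0) :
    (2 * (n : ℝ) - 2) ^ α + ((n : ℝ) - 1) * ((n : ℝ) - 2) ^ α ≤ S α G ∧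
    (S α G = (2 * (n : ℝ) - 2) ^ α + ((n : ℝ) - 1) * ((n : ℝ) - 2) ^ α ↔ G = ⊤) := by
  have hpos := eigs_pos G hconn hnonbip
  have hS : S α G = ∑ v, eigs G v ^ α := by
    unfold S
    rw [Finset.filter_true_of_mem fun v _ => (hpos v).ne']
  have hn' : (3 : ℝ) ≤ n := by exact_mod_cast hn
  have ha : (0 : ℝ) < 2 * n - 2 := by linarith
  have hb : (0 : ℝ) < n - 2 := by linarith
  have hlt : G ≠ ⊤ →
      (2 * (n : ℝ) - 2) ^ α + ((n : ℝ) - 1) * ((n : ℝ) - 2) ^ α < S α G := by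
    intro hG
    have hd := sum_rdeg_lt G hG
    have hK := sum_rpow_ge hα ha hb (eigs G) (wt G) hpos (wt_nonneg G)
      (sum_wt G (by omega))
    rw [sum_wt_mul_eigs, sum_eigs, hcard] at hK
    rw [hcard] at hd
    rw [hS]
    generalize ∑ i, rdeg G i = d at hd hK
    have hdn : d / n < n - 1 := by
      rw [div_lt_iff₀ (by linarith)]
      linarith
    have e1 : 2 * d / n - (2 * n - 2) < 0 := by
      rw [mul_div_assoc]; linarith
    have e2 : d - 2 * d / n - ((n : ℝ) - 1) * (n - 2) < 0 := by
      have : d - 2 * d / n - ((n : ℝ) - 1) * (n - 2) = (d / n - (n - 1)) * (n - 2) := by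
        field_simp
      rw [this]
      exact mul_neg_of_neg_of_pos (by linarith) hb
    have f1 := mul_pos_of_neg_of_neg
      (mul_neg_of_neg_of_pos hα (Real.rpow_pos_of_pos ha (α - 1))) e1
    have f2 := mul_pos_of_neg_of_neg
      (mul_neg_of_neg_of_pos hα (Real.rpow_pos_of_pos hb (α - 1))) e2
    linarith
  have heq : G = ⊤ →
      S α G = (2 * (n : ℝ) - 2) ^ α + ((n : ℝ) - 1) * ((n : ℝ) - 2) ^ α := by
    rintro rfl
    have hne : (n : ℝ) ≠ 0 := by linarith
    -- Any function on `{n - 2, 2n - 2}` is affine, so its sum is determined by the trace.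
    have h1 : ∀ v, eigs (⊤ : SimpleGraph V) v ^ α = ((n : ℝ) - 2) ^ α
        + ((2 * (n : ℝ) - 2) ^ α - ((n : ℝ) - 2) ^ α) / n
          * (eigs (⊤ : SimpleGraph V) v - (n - 2)) := by
      intro v
      rcases eigs_top v with h | h <;> rw [h, hcard]
      · ring
      · field_simp
        ring
    rw [hS]
    simp only [h1, Finset.sum_add_distrib, ← Finset.mul_sum, Finset.sum_sub_distrib, sum_eigs,
      rdeg_top, Finset.sum_const, Finset.card_univ, nsmul_eq_mul, hcard]
    field_simp
    ring
  by_cases hG : G = ⊤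
  · exact ⟨(heq hG).ge, fun _ => hG, heq⟩
  · exact ⟨(hlt hG).le, fun h => absurd h (hlt hG).ne', fun h => absurd h hG⟩

end SLP
end
end

section
/- Let n, k be positive integers with 1 ≤ k ≤ n−2 and let α > 0 be a real number. Then there exists an integer i with 1 ≤ i ≤ ⌊(n−k)/2⌋ such that every connected finite simple graph G on n vertices with vertex connectivity at most k satisfies S_α(G) ≤ S_α(G(i)), where G(i) = K_k ∨ (K_i ∪ K_{n−k−i}). -/
/-!
For `α > 0` the sum `S α G` is just `∑ q_i ^ α` over all signless Laplacian eigenvalues, because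
`0 ^ α = 0`, and every `q_i` is nonnegative. The quadratic form of `Q(G)` is
`x ↦ ∑_{uv ∈ E(G)} (x_u + x_v) ^ 2`, so adding edges increases it, and by Weyl's monotonicity
principle (`eigenvalues_le_of_inner_le`) each sorted eigenvalue increases too. Hence `S α` is
monotone in the graph (`S_mono`); it is also invariant under relabelling of the vertices
(`S_comap_equiv`), since `S α` only depends on the characteristic polynomial.

If `G` has connectivity at most `k ≤ n - 2`, a vertex cut can be enlarged to a cut of exactly `k`
vertices, which splits the other `n - k` vertices into two nonempty parts with no edges between
them (`exists_separation`). With `i` the size of the smaller part, `G` is, up to relabelling, a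
spanning subgraph of `G(i)` (`exists_S_le_Gik`), so `S α G ≤ S α (G(i))`. Taking the best of the
finitely many `i` with `1 ≤ i ≤ (n - k) / 2` gives the result.
-/

open Matrix Finset

noncomputable section

namespace SLP

variable {V : Type*} [Fintype V] [DecidableEq V]

/-- The join `G ∨ H` of two graphs: the disjoint union together with all edges
joining a vertex of `G` to a vertex of `H`. -/
def join {α β : Type*} (G : SimpleGraph α) (H : SimpleGraph β) : SimpleGraph (α ⊕ β) :=
  (Gᶜ ⊕g Hᶜ)ᶜ

/-- The graph `G(i) = K_k ∨ (K_i ∪ K_{n-k-i})`. -/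
def Gik (n k i : ℕ) : SimpleGraph (Fin k ⊕ (Fin i ⊕ Fin (n - k - i))) :=
  join (⊤ : SimpleGraph (Fin k))
    ((⊤ : SimpleGraph (Fin i)) ⊕g (⊤ : SimpleGraph (Fin (n - k - i))))

/-- `G` has vertex connectivity at most `k`: either `k ≥ n - 1`, or there is a set of
at most `k` vertices whose deletion leaves a disconnected graph. -/
def ConnAtMost (G : SimpleGraph V) (k : ℕ) : Prop :=
  Fintype.card V ≤ k + 1 ∨
    ∃ U : Finset V, U.card ≤ k ∧ ¬ (G.induce ((↑U : Set V)ᶜ)).Connected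

/-! ### Monotonicity of eigenvalues of symmetric operators -/

section Weyl

variable {E : Type*} [NormedAddCommGroup E] [InnerProductSpace ℝ E] [FiniteDimensional ℝ E]

/-- The quadratic form of a symmetric operator, diagonalised in its eigenbasis. -/
lemma inner_apply_self_eq_sum {n : ℕ} {T : E →ₗ[ℝ] E} (hT : T.IsSymmetric)
    (hn : Module.finrank ℝ E = n) (x : E) :
    inner ℝ (T x) x =
      ∑ j, hT.eigenvalues hn j * (inner ℝ (hT.eigenvectorBasis hn j) x) ^ 2 := by
  rw [← (hT.eigenvectorBasis hn).sum_inner_mul_inner (T x) x]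
  refine Finset.sum_congr rfl fun j _ => ?_
  rw [hT, hT.apply_eigenvectorBasis, inner_smul_right, real_inner_comm x]
  simp only [RCLike.ofReal_real_eq_id, id]
  ring

/-- **Weyl's monotonicity principle**: if the quadratic form of `T` is dominated by that of `T'`,
then each eigenvalue of `T` (in decreasing order) is at most the corresponding one of `T'`. -/
lemma eigenvalues_le_of_inner_le {n : ℕ} {T T' : E →ₗ[ℝ] E} (hT : T.IsSymmetric)
    (hT' : T'.IsSymmetric) (hn : Module.finrank ℝ E = n)
    (h : ∀ x, inner ℝ (T x) x ≤ inner ℝ (T' x) x) (i : Fin n) :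
    hT.eigenvalues hn i ≤ hT'.eigenvalues hn i := by
  set b := hT.eigenvectorBasis hn
  set c := hT'.eigenvectorBasis hn
  -- A nonzero `x` in `span {b j | j ≤ i} ∩ span {c j | i ≤ j}` is cut out by `n - 1` equations.
  let L : E →ₗ[ℝ] ({j : Fin n // j ≠ i} → ℝ) :=
    LinearMap.pi fun j => (innerₛₗ ℝ (if i < j.1 then b j else c j))
  have hL : LinearMap.ker L ≠ ⊥ := by
    apply LinearMap.ker_ne_bot_of_finrank_lt
    have hpos : 0 < n := i.pos
    rw [Module.finrank_fintype_fun_eq_card, hn, Fintype.card_subtype_compl]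
    simp
    omega
  obtain ⟨x, hx, hx0⟩ := Submodule.exists_mem_ne_zero_of_ne_bot hL
  have hxL : ∀ j : Fin n, j ≠ i → inner ℝ (if i < j then b j else c j) x = 0 := fun j hj =>
    congrFun (LinearMap.mem_ker.mp hx) ⟨j, hj⟩
  have hb : ∀ j, i < j → inner ℝ (b j) x = 0 := fun j hj => by
    simpa [hj] using hxL j hj.ne'
  have hc : ∀ j, j < i → inner ℝ (c j) x = 0 := fun j hj => by
    simpa [not_lt.mpr hj.le] using hxL j hj.ne
  have hnb : ∑ j, (inner ℝ (b j) x) ^ 2 = ‖x‖ ^ 2 := by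
    simpa using b.sum_sq_norm_inner_right x
  have hnc : ∑ j, (inner ℝ (c j) x) ^ 2 = ‖x‖ ^ 2 := by
    simpa using c.sum_sq_norm_inner_right x
  have h1 : hT.eigenvalues hn i * ‖x‖ ^ 2 ≤ inner ℝ (T x) x := by
    rw [inner_apply_self_eq_sum hT hn, ← hnb, Finset.mul_sum]
    refine Finset.sum_le_sum fun j _ => ?_
    rcases le_or_gt j i with hj | hj
    · exact mul_le_mul_of_nonneg_right (hT.eigenvalues_antitone hn hj) (sq_nonneg _)
    · rw [hb j hj]; simp
  have h2 : inner ℝ (T' x) x ≤ hT'.eigenvalues hn i * ‖x‖ ^ 2 := by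
    rw [inner_apply_self_eq_sum hT' hn, ← hnc, Finset.mul_sum]
    refine Finset.sum_le_sum fun j _ => ?_
    rcases le_or_gt i j with hj | hj
    · exact mul_le_mul_of_nonneg_right (hT'.eigenvalues_antitone hn hj) (sq_nonneg _)
    · rw [hc j hj]; simp
  have hxpos : 0 < ‖x‖ ^ 2 := by positivity
  exact le_of_mul_le_mul_right ((h1.trans (h x)).trans h2) hxpos

end Weyl

/-! ### Monotonicity and isomorphism invariance of `S α` -/

open Classical in
/-- The quadratic form of `Q G` is the sum of `(x u + x v) ^ 2` over the edges; the double sum counts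
each edge twice. -/
lemma dotProduct_Q_mulVec (G : SimpleGraph V) (x : V → ℝ) :
    x ⬝ᵥ (Q G *ᵥ x) = (∑ u, ∑ v, if G.Adj u v then (x u + x v) ^ 2 else 0) / 2 := by
  have hQ : Q G = G.degMatrix ℝ + G.adjMatrix ℝ := by
    unfold Q; congr!
  have hsymm : ∑ u, ∑ v, (if G.Adj u v then x u * x u else 0) =
      ∑ u, ∑ v, (if G.Adj u v then x v * x v else 0) := by
    rw [Finset.sum_comm]
    simp_rw [G.adj_comm]
  have hexp : ∑ u, ∑ v, (if G.Adj u v then (x u + x v) ^ 2 else 0) =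
      ∑ u, ∑ v, (if G.Adj u v then x u * x u else 0) +
      ∑ u, ∑ v, (if G.Adj u v then x v * x v else 0) +
      2 * ∑ u, ∑ v, (if G.Adj u v then x u * x v else 0) := by
    simp_rw [Finset.mul_sum, ← Finset.sum_add_distrib]
    refine Finset.sum_congr rfl fun u _ => Finset.sum_congr rfl fun v _ => ?_
    split_ifs <;> ring
  have hdeg : x ⬝ᵥ (G.degMatrix ℝ *ᵥ x) =
      ∑ u, ∑ v, (if G.Adj u v then x u * x u else 0) := by
    rw [G.dotProduct_mulVec_degMatrix]
    simp_rw [SimpleGraph.degree_eq_sum_if_adj, Finset.sum_mul, ite_mul, one_mul, zero_mul]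
  rw [hQ, add_mulVec, dotProduct_add, hdeg, SimpleGraph.dotProduct_mulVec_adjMatrix, hexp, ← hsymm]
  ring

lemma eigs_nonneg (G : SimpleGraph V) (v : V) : 0 ≤ eigs G v := by
  classical
  have h : (Q G).PosSemidef := by
    refine PosSemidef.of_dotProduct_mulVec_nonneg (Q_isHermitian G) fun x => ?_
    rw [star_trivial, dotProduct_Q_mulVec]
    positivity
  exact h.eigenvalues_nonneg v

lemma eigs_mono {G H : SimpleGraph V} (h : G ≤ H) (v : V) : eigs G v ≤ eigs H v := by
  classical
  refine eigenvalues_le_of_inner_le _ _ _ (fun x => ?_) _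
  simp only [toLpLin_apply, EuclideanSpace.inner_eq_star_dotProduct, star_trivial]
  rw [dotProduct_Q_mulVec, dotProduct_Q_mulVec]
  gcongr with u _ w _
  by_cases hG : G.Adj u w
  · simp [hG, h hG]
  · rw [if_neg hG]; positivity

lemma S_eq_sum {α : ℝ} (hα : 0 < α) (G : SimpleGraph V) : S α G = ∑ v, eigs G v ^ α := by
  refine Finset.sum_subset (Finset.filter_subset _ _) fun v _ hv => ?_
  have h0 : eigs G v = 0 := by simpa using hv
  rw [h0, Real.zero_rpow hα.ne']

lemma S_mono {α : ℝ} (hα : 0 < α) {G H : SimpleGraph V} (h : G ≤ H) : S α G ≤ S α H := by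
  rw [S_eq_sum hα, S_eq_sum hα]
  exact Finset.sum_le_sum fun v _ =>
    Real.rpow_le_rpow (eigs_nonneg G v) (eigs_mono h v) hα.le

lemma S_comap_equiv {W : Type*} [Fintype W] [DecidableEq W] {α : ℝ} (hα : 0 < α) (e : W ≃ V)
    (G : SimpleGraph V) : S α (G.comap e) = S α G := by
  classical
  have hQ : Q (G.comap e) = (Q G).reindex e.symm e.symm := by
    have hQG : Q G = G.degMatrix ℝ + G.adjMatrix ℝ := by unfold Q; congr!
    have hQH : Q (G.comap e) = (G.comap e).degMatrix ℝ + (G.comap e).adjMatrix ℝ := by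
      unfold Q; congr!
    rw [hQG, hQH]
    ext a b
    have hdeg : (G.comap e).degree a = G.degree (e a) :=
      ((SimpleGraph.Iso.comap e G).degree_eq a).symm
    simp [SimpleGraph.degMatrix, Matrix.diagonal_apply, SimpleGraph.adjMatrix_apply, hdeg]
  have hroots : Finset.univ.val.map (eigs (G.comap e)) = Finset.univ.val.map (eigs G) := by
    have h1 := (Q_isHermitian (G.comap e)).roots_charpoly_eq_eigenvalues
    have h2 := (Q_isHermitian G).roots_charpoly_eq_eigenvalues
    have h3 : (Q (G.comap e)).charpoly = (Q G).charpoly := by rw [hQ, charpoly_reindex]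
    exact h1.symm.trans ((congrArg _ h3).trans h2)
  rw [S_eq_sum hα, S_eq_sum hα]
  have := congrArg (fun m => (m.map fun q : ℝ => q ^ α).sum) hroots
  simp only [Multiset.map_map, Function.comp_def] at this
  exact this

/-! ### Embedding a graph of small connectivity into some `G(i)` -/

/-- A vertex cut of at most `k ≤ n - 2` vertices can be enlarged to one, `U`, of exactly `k`
vertices; `A` is the smaller of the two sides left by `U`. -/
lemma exists_separation {n k : ℕ} (hkn : k + 2 ≤ n) (G : SimpleGraph (Fin n))
    (hG : ConnAtMost G k) :
    ∃ U A : Finset (Fin n), U.card = k ∧ Disjoint U A ∧ 1 ≤ A.card ∧ A.card ≤ (n - k) / 2 ∧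
      ∀ a ∈ A, ∀ b, b ∉ U → b ∉ A → ¬ G.Adj a b := by
  classical
  rcases hG with hG | ⟨U₀, hU₀, hdis⟩
  · rw [Fintype.card_fin] at hG; omega
  set H := G.induce ((↑U₀ : Set (Fin n))ᶜ) with hH
  obtain ⟨u, v, huv⟩ : ∃ u v, ¬ H.Reachable u v := by
    by_contra! hcon
    refine hdis ((SimpleGraph.connected_iff _).mpr ⟨hcon, ?_⟩)
    obtain ⟨x, hx⟩ : ∃ x, x ∉ U₀ := by
      by_contra! hall
      have := Finset.card_le_card (fun x _ => hall x : Finset.univ ⊆ U₀)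
      rw [Finset.card_univ, Fintype.card_fin] at this
      omega
    exact ⟨⟨x, by simpa using hx⟩⟩
  have huv' : u.1 ≠ v.1 := fun h => huv (Subtype.ext h ▸ SimpleGraph.Reachable.refl u)
  have hu : u.1 ∉ U₀ := u.2
  have hv : v.1 ∉ U₀ := v.2
  -- Enlarge the cut while keeping `u` and `v` on their respective sides.
  obtain ⟨U, hU₀U, hUuv, hUk⟩ := Finset.exists_subsuperset_card_eq
    (s := U₀) (t := Finset.univ \ {u.1, v.1}) (n := k)
    (fun x hx => by
      simp only [Finset.mem_sdiff, Finset.mem_univ, true_and, Finset.mem_insert,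
        Finset.mem_singleton, not_or]
      exact ⟨fun h => hu (h ▸ hx), fun h => hv (h ▸ hx)⟩) hU₀
    (by
      rw [Finset.card_sdiff_of_subset (Finset.subset_univ _), Finset.card_univ, Fintype.card_fin,
        Finset.card_pair huv']
      omega)
  have huU : u.1 ∉ U := fun h => by simpa using hUuv h
  have hvU : v.1 ∉ U := fun h => by simpa using hUuv h
  let A : Finset (Fin n) :=
    Finset.univ.filter fun x => x ∉ U ∧ ∃ h : x ∈ ((↑U₀ : Set (Fin n))ᶜ), H.Reachable u ⟨x, h⟩
  have hA : ∀ x, x ∈ A ↔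
      x ∉ U ∧ ∃ h : x ∈ ((↑U₀ : Set (Fin n))ᶜ), H.Reachable u ⟨x, h⟩ := fun x => by simp [A]
  have hdisj : Disjoint U A := Finset.disjoint_left.mpr fun x hx hxA => ((hA x).mp hxA).1 hx
  have hsep : ∀ a ∈ A, ∀ b, b ∉ U → b ∉ A → ¬ G.Adj a b := by
    intro a ha b hbU hbA hab
    obtain ⟨-, ha0, har⟩ := (hA a).mp ha
    have hb0 : b ∈ ((↑U₀ : Set (Fin n))ᶜ) := fun h => hbU (hU₀U h)
    have hadj : H.Adj ⟨a, ha0⟩ ⟨b, hb0⟩ := by simpa [hH] using hab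
    exact hbA ((hA b).mpr ⟨hbU, hb0, har.trans hadj.reachable⟩)
  have huA : u.1 ∈ A := (hA _).mpr ⟨huU, u.2, SimpleGraph.Reachable.refl u⟩
  have hvA : v.1 ∉ A := fun h => huv ((hA _).mp h).2.2
  have hcard : (U ∪ A).card = k + A.card := by rw [Finset.card_union_of_disjoint hdisj, hUk]
  have hcompl : ((U ∪ A)ᶜ).card = n - (k + A.card) := by
    rw [Finset.card_compl, Fintype.card_fin, hcard]
  rcases le_or_gt A.card ((n - k) / 2) with hle | hgt
  · exact ⟨U, A, hUk, hdisj, Finset.card_pos.mpr ⟨_, huA⟩, hle, hsep⟩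
  · refine ⟨U, (U ∪ A)ᶜ, hUk, ?_, Finset.card_pos.mpr ⟨v.1, by simp [hvU, hvA]⟩, by omega, ?_⟩
    · exact Finset.disjoint_left.mpr fun x hx => by simp [hx]
    · intro a ha b hbU hb hab
      simp only [Finset.mem_compl, Finset.mem_union, not_or, not_and, not_not] at ha hb
      exact hsep b (hb hbU) a ha.1 ha.2 hab.symm

/-- Two vertices of `G(i)` are adjacent unless they are equal or lie in the two different cliques
`K_i` and `K_{n-k-i}`. -/
lemma Gik_adj {n k i : ℕ} {x y : Fin k ⊕ (Fin i ⊕ Fin (n - k - i))} (hxy : x ≠ y)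
    (h₁ : ∀ a b, x = .inr (.inl a) → y ≠ .inr (.inr b))
    (h₂ : ∀ a b, x = .inr (.inr a) → y ≠ .inr (.inl b)) : (Gik n k i).Adj x y := by
  rcases x with x | x | x <;> rcases y with y | y | y <;>
    simp_all [Gik, join]

/-- A graph of connectivity at most `k` is, up to relabelling, a spanning subgraph of some `G(i)`,
so its `S α` is at most that of `G(i)`. -/
lemma exists_S_le_Gik {n k : ℕ} (hkn : k + 2 ≤ n) {α : ℝ} (hα : 0 < α)
    (G : SimpleGraph (Fin n)) (hG : ConnAtMost G k) :
    ∃ i, 1 ≤ i ∧ i ≤ (n - k) / 2 ∧ S α G ≤ S α (Gik n k i) := by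
  classical
  obtain ⟨U, A, hU, hdisj, hA1, hA2, hsep⟩ := exists_separation hkn G hG
  refine ⟨A.card, hA1, hA2, ?_⟩
  have hB : ((U ∪ A)ᶜ).card = n - k - A.card := by
    rw [Finset.card_compl, Fintype.card_fin, Finset.card_union_of_disjoint hdisj, hU]
    omega
  let f : Fin k ⊕ (Fin A.card ⊕ Fin (n - k - A.card)) → Fin n :=
    Sum.elim (U.orderEmbOfFin hU)
      (Sum.elim (A.orderEmbOfFin rfl) (((U ∪ A)ᶜ).orderEmbOfFin hB))
  have hfA : ∀ a, f (.inr (.inl a)) ∈ A := fun a => A.orderEmbOfFin_mem rfl a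
  have hfB : ∀ b, f (.inr (.inr b)) ∉ U ∧ f (.inr (.inr b)) ∉ A := fun b => by
    have h : f (.inr (.inr b)) ∈ (U ∪ A)ᶜ := ((U ∪ A)ᶜ).orderEmbOfFin_mem hB b
    rwa [Finset.mem_compl, Finset.mem_union, not_or] at h
  have hfU : ∀ a, f (.inl a) ∈ U := fun a => U.orderEmbOfFin_mem hU a
  have hinj : Function.Injective f := by
    refine (U.orderEmbOfFin hU).injective.sumElim
      ((A.orderEmbOfFin rfl).injective.sumElim (((U ∪ A)ᶜ).orderEmbOfFin hB).injective ?_) ?_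
    · intro a b hab
      have hab' : f (.inr (.inl a)) = f (.inr (.inr b)) := hab
      exact (hfB b).2 (hab' ▸ hfA a)
    · rintro a (b | b) hab
      · have hab' : f (.inl a) = f (.inr (.inl b)) := hab
        exact Finset.disjoint_left.mp hdisj (hab' ▸ hfU a) (hfA b)
      · have hab' : f (.inl a) = f (.inr (.inr b)) := hab
        exact (hfB b).1 (hab' ▸ hfU a)
  have hbij : Function.Bijective f := by
    refine (Fintype.bijective_iff_injective_and_card f).mpr ⟨hinj, ?_⟩
    simp only [Fintype.card_sum, Fintype.card_fin]
    omega
  let e := Equiv.ofBijective f hbij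
  rw [← S_comap_equiv hα e G]
  refine S_mono hα fun x y hxy => ?_
  have hadj : G.Adj (f x) (f y) := hxy
  refine Gik_adj hxy.ne ?_ ?_
  · rintro a b rfl rfl
    exact hsep _ (hfA a) _ (hfB b).1 (hfB b).2 hadj
  · rintro a b rfl rfl
    exact hsep _ (hfA b) _ (hfB a).1 (hfB a).2 hadj.symm

theorem exists_Gik_maximizing_S_alpha (n k : ℕ) (hk : 1 ≤ k) (hkn : k ≤ n - 2)
    (α : ℝ) (hα : 0 < α) :
    ∃ i : ℕ, 1 ≤ i ∧ i ≤ (n - k) / 2 ∧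
      ∀ G : SimpleGraph (Fin n), G.Connected → ConnAtMost G k →
        S α G ≤ S α (Gik n k i) := by
  have hkn' : k + 2 ≤ n := by omega
  obtain ⟨i, hi, hmax⟩ := Finset.exists_max_image (Finset.Icc 1 ((n - k) / 2))
    (fun i => S α (Gik n k i)) ⟨1, Finset.mem_Icc.mpr ⟨le_rfl, by omega⟩⟩
  rw [Finset.mem_Icc] at hi
  refine ⟨i, hi.1, hi.2, fun G _ hG => ?_⟩
  obtain ⟨j, hj1, hj2, hj⟩ := exists_S_le_Gik hkn' hα G hG
  exact hj.trans (hmax j (Finset.mem_Icc.mpr ⟨hj1, hj2⟩))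

end SLP
end
end
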